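/- arXiv:2601.20018 — 3 statements merged into one kernel-verified Lean document; each statement's English description precedes it below -/
import Mathlib

section
/- Let A = [a(i,j)] ∈ R^{N×N} be a fixed matrix with all entries in [0,1], and let f(π) := Σ_{i=1}^N a(i,π(i)). Then for every λ ≥ 0: E[ exp( λ ( f(π) − E[f(π)] ) ) ] ≤ exp( 2 E[f(π)] · λ ( e^{2λ} − 1 ) ). -/
open scoped BigOperators Classical

/-- Expectation of `f` under the uniform distribution on `S_N`. -/
noncomputable def permExp (N : ℕ) (f : Equiv.Perm (Fin N) → ℝ) : ℝ :=
  (∑ σ : Equiv.Perm (Fin N), f σ) / (Nat.factorial N : ℝ)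

/-!
By convexity `exp (λ x) ≤ 1 + (exp λ - 1) x` on `[0, 1]`, so it suffices to bound
`∑ σ, ∏ i, (1 + c i (σ i))` for the nonnegative matrix `c = (exp λ - 1) a`. At most `(n - #s)!`
permutations have a prescribed restriction to `s`, so expanding the product bounds this sum by
`∑ s, (n - #s)! ∏ i ∈ s, r i`, where `r i` is the `i`-th row sum of `c`. Since
`k! = ∫₀^∞ tᵏ e⁻ᵗ dt`, the latter is `∫₀^∞ ∏ i, (r i + t) e⁻ᵗ dt`; AM-GM replaces every `r i` by
their mean `m`, and the shift `t ↦ t - m` bounds the resulting integral by `n! eᵐ`. Thus the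
centred statistic, of mean `μ` before centring, satisfies the Poisson bound
`exp (μ (exp λ - 1 - λ))`.
-/

open Equiv (Perm)
open Finset MeasureTheory
open Real (exp)
open scoped Nat

section Permutations

variable {ι : Type*} [Fintype ι] [DecidableEq ι]

theorem card_perm_forall_mem_eq (s : Finset ι) (τ : Perm ι) :
    #{σ : Perm ι | ∀ i ∈ s, σ i = τ i} = (Fintype.card ι - #s)! := by
  have translate : {σ : Perm ι // ∀ i ∈ s, σ i = τ i} ≃ {σ : Perm ι // ∀ i, ¬ i ∉ s → σ i = i} :=
    (Equiv.mulLeft τ⁻¹).subtypeEquiv fun σ => by simp [Equiv.eq_symm_apply, eq_comm]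
  rw [← Fintype.card_subtype, Fintype.card_congr translate,
    ← Fintype.card_congr (Perm.subtypeEquivSubtypePerm (· ∉ s)), Fintype.card_perm,
    Fintype.card_subtype_compl, Fintype.card_coe]

theorem card_perm_restrict_eq_le (s : Finset ι) (g : s → ι) :
    #{σ : Perm ι | s.restrict σ = g} ≤ (Fintype.card ι - #s)! := by
  by_cases h : ∃ τ : Perm ι, s.restrict τ = g
  · obtain ⟨τ, rfl⟩ := h
    simp only [funext_iff, Finset.restrict, Subtype.forall, card_perm_forall_mem_eq, le_refl]
  · rw [filter_false_of_mem fun σ _ hσ => h ⟨σ, hσ⟩, card_empty]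
    exact Nat.zero_le _

theorem sum_perm_apply {M : Type*} [AddCommMonoid M] (i : ι) (g : ι → M) :
    ∑ σ : Perm ι, g (σ i) = (Fintype.card ι - 1)! • ∑ j, g j := by
  have card_fiber (j : ι) : #{σ : Perm ι | σ i = j} = (Fintype.card ι - 1)! := by
    simpa using card_perm_forall_mem_eq {i} (Equiv.swap i j)
  simp only [← sum_fiberwise' univ (fun σ : Perm ι => σ i) g, sum_const, card_fiber,
    Finset.smul_sum]

section OrderedSemiring

variable {R : Type*} [CommSemiring R] [PartialOrder R] [IsOrderedRing R] {c : ι → ι → R}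

theorem sum_perm_prod_le (s : Finset ι) (hc : ∀ i j, 0 ≤ c i j) :
    ∑ σ : Perm ι, ∏ i ∈ s, c i (σ i) ≤
      ((Fintype.card ι - #s)! : R) * ∏ i ∈ s, ∑ j, c i j := by
  calc ∑ σ : Perm ι, ∏ i ∈ s, c i (σ i)
      = ∑ σ : Perm ι, ∏ i : s, c i (s.restrict σ i) :=
        sum_congr rfl fun σ _ => (prod_coe_sort s fun i => c i (σ i)).symm
    _ = ∑ g : s → ι, #{σ : Perm ι | s.restrict σ = g} • ∏ i : s, c i (g i) := by
        simp only [← sum_fiberwise' univ (fun σ : Perm ι => s.restrict σ)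
          (fun g : s → ι => ∏ i : s, c i (g i)), sum_const]
    _ ≤ ∑ g : s → ι, (Fintype.card ι - #s)! • ∏ i : s, c i (g i) := by
        gcongr with g
        · exact prod_nonneg fun i _ => hc i (g i)
        · exact card_perm_restrict_eq_le s g
    _ = ((Fintype.card ι - #s)! : R) * ∏ i ∈ s, ∑ j, c i j := by
        rw [← Finset.smul_sum, nsmul_eq_mul, ← Fintype.prod_sum, prod_coe_sort s
          fun i => ∑ j, c i j]

theorem sum_perm_prod_one_add_le_sum_factorial (hc : ∀ i j, 0 ≤ c i j) :
    ∑ σ : Perm ι, ∏ i, (1 + c i (σ i)) ≤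
      ∑ s : Finset ι, ((Fintype.card ι - #s)! : R) * ∏ i ∈ s, ∑ j, c i j := by
  simp only [prod_one_add, powerset_univ]
  rw [sum_comm]
  exact sum_le_sum fun s _ => sum_perm_prod_le s hc

end OrderedSemiring

end Permutations

section ExponentialMoments

theorem integrableOn_pow_mul_exp_neg_Ioi (n : ℕ) :
    IntegrableOn (fun t : ℝ => t ^ n * exp (-t)) (Set.Ioi 0) := by
  simpa [mul_comm] using Real.GammaIntegral_convergent (s := n + 1) (by positivity)

theorem integral_pow_mul_exp_neg_Ioi (n : ℕ) :
    ∫ t in Set.Ioi (0 : ℝ), t ^ n * exp (-t) = n ! := by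
  simpa [mul_comm, Real.Gamma_nat_eq_factorial] using
    (Real.Gamma_eq_integral (s := n + 1) (by positivity)).symm

variable {ι : Type*} [Fintype ι]

theorem prod_add_mul_exp_neg_eq_sum (r : ι → ℝ) (t : ℝ) :
    (∏ i, (r i + t)) * exp (-t) =
      ∑ s : Finset ι, (∏ i ∈ s, r i) * (t ^ (Fintype.card ι - #s) * exp (-t)) := by
  simp only [prod_add, powerset_univ, prod_const, ← compl_eq_univ_sdiff,
    card_compl, sum_mul, mul_assoc]

theorem integrableOn_prod_add_mul_exp_neg_Ioi (r : ι → ℝ) :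
    IntegrableOn (fun t : ℝ => (∏ i, (r i + t)) * exp (-t)) (Set.Ioi 0) := by
  simp only [prod_add_mul_exp_neg_eq_sum]
  exact integrable_finsetSum _ fun s _ => (integrableOn_pow_mul_exp_neg_Ioi _).const_mul _

theorem integral_prod_add_mul_exp_neg_Ioi (r : ι → ℝ) :
    ∫ t in Set.Ioi (0 : ℝ), (∏ i, (r i + t)) * exp (-t) =
      ∑ s : Finset ι, ((Fintype.card ι - #s)! : ℝ) * ∏ i ∈ s, r i := by
  simp only [prod_add_mul_exp_neg_eq_sum]
  rw [integral_finsetSum _ fun s _ => (integrableOn_pow_mul_exp_neg_Ioi _).const_mul _]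
  simp only [integral_const_mul, integral_pow_mul_exp_neg_Ioi, mul_comm]

theorem integral_add_pow_mul_exp_neg_Ioi_le (n : ℕ) {m : ℝ} (hm : 0 ≤ m) :
    ∫ t in Set.Ioi (0 : ℝ), (m + t) ^ n * exp (-t) ≤ n ! * exp m := by
  calc ∫ t in Set.Ioi (0 : ℝ), (m + t) ^ n * exp (-t)
      = ∫ t in Set.Ioi (0 : ℝ), (t + m) ^ n * exp (-(t + m)) * exp m := by
        refine integral_congr_ae (.of_forall fun t => ?_)
        simp only [mul_assoc, ← Real.exp_add, add_comm m t, neg_add_rev, neg_add_cancel_comm]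
    _ = (∫ u in Set.Ioi m, u ^ n * exp (-u)) * exp m := by
        have shift := (measurePreserving_add_right volume m).setIntegral_preimage_emb
          (measurableEmbedding_addRight m) (fun u => u ^ n * exp (-u)) (Set.Ioi m)
        rw [Set.preimage_add_const_Ioi, sub_self] at shift
        rw [integral_mul_const, shift]
    _ ≤ (∫ u in Set.Ioi (0 : ℝ), u ^ n * exp (-u)) * exp m := by
        refine mul_le_mul_of_nonneg_right ?_ (Real.exp_pos m).le
        refine setIntegral_mono_set (integrableOn_pow_mul_exp_neg_Ioi n) ?_
          (Set.Ioi_subset_Ioi hm).eventuallyLE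
        filter_upwards [ae_restrict_mem measurableSet_Ioi] with u (hu : 0 < u)
        simp only [Pi.zero_apply]
        positivity
    _ = n ! * exp m := by rw [integral_pow_mul_exp_neg_Ioi]

end ExponentialMoments

theorem prod_le_sum_div_card_pow {ι : Type*} (s : Finset ι) {z : ι → ℝ} (hz : ∀ i ∈ s, 0 ≤ z i) :
    ∏ i ∈ s, z i ≤ ((∑ i ∈ s, z i) / #s) ^ #s := by
  obtain rfl | hs := s.eq_empty_or_nonempty
  · simp
  have hcard : 0 < #s := hs.card_pos
  have geom_mean_le : (∏ i ∈ s, z i) ^ (#s : ℝ)⁻¹ ≤ (∑ i ∈ s, z i) / #s := by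
    simpa using Real.geom_mean_le_arith_mean s 1 z (by simp) (by simpa using hs) hz
  calc ∏ i ∈ s, z i = ((∏ i ∈ s, z i) ^ (#s : ℝ)⁻¹) ^ #s :=
        (Real.rpow_inv_natCast_pow (prod_nonneg hz) hcard.ne').symm
    _ ≤ ((∑ i ∈ s, z i) / #s) ^ #s :=
        pow_le_pow_left₀ (Real.rpow_nonneg (prod_nonneg hz) _) geom_mean_le _

theorem exp_mul_le_one_add_mul (x : ℝ) {p : ℝ} (hp : p ∈ Set.Icc (0 : ℝ) 1) :
    exp (x * p) ≤ 1 + (exp x - 1) * p := by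
  have chord := convexOn_exp.2 (Set.mem_univ 0) (Set.mem_univ x) (sub_nonneg.2 hp.2) hp.1
    (sub_add_cancel 1 p)
  simp only [smul_eq_mul, mul_zero, zero_add, Real.exp_zero, mul_one] at chord
  rw [mul_comm x p]
  linarith

theorem exp_sub_one_sub_le (x : ℝ) :
    exp x - 1 - x ≤ 2 * x * (exp (2 * x) - 1) := by
  have tangent : exp x - 1 ≤ x * exp x := by
    have := mul_le_mul_of_nonneg_right (Real.one_sub_le_exp_neg x) (Real.exp_pos x).le
    rw [← Real.exp_add, neg_add_cancel, Real.exp_zero] at this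
    linarith
  have hnonneg : 0 ≤ x * (exp x - 1) := by linarith [Real.add_one_le_exp x]
  calc exp x - 1 - x ≤ x * (exp x - 1) := by linarith
    _ ≤ x * (exp x - 1) * (2 * (exp x + 1)) :=
        le_mul_of_one_le_right hnonneg (by linarith [Real.exp_pos x])
    _ = 2 * x * (exp (2 * x) - 1) := by
        rw [two_mul x, Real.exp_add]
        ring

section Bounds

variable {ι : Type*} [Fintype ι]

theorem prod_add_le_mean_add_pow {r : ι → ℝ} {t : ℝ} (h : ∀ i, 0 ≤ r i + t) :
    ∏ i, (r i + t) ≤ ((∑ i, r i) / Fintype.card ι + t) ^ Fintype.card ι := by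
  cases isEmpty_or_nonempty ι
  · simp
  have := prod_le_sum_div_card_pow univ fun i _ => h i
  rwa [sum_add_distrib, sum_const, card_univ, nsmul_eq_mul, add_div,
    mul_div_cancel_left₀ t (by positivity)] at this

theorem sum_factorial_mul_prod_le {r : ι → ℝ} (hr : ∀ i, 0 ≤ r i) :
    ∑ s : Finset ι, ((Fintype.card ι - #s)! : ℝ) * ∏ i ∈ s, r i ≤
      (Fintype.card ι)! * exp ((∑ i, r i) / Fintype.card ι) := by
  set m := (∑ i, r i) / Fintype.card ι
  have hm : 0 ≤ m := div_nonneg (sum_nonneg fun i _ => hr i) (Nat.cast_nonneg _)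
  calc ∑ s : Finset ι, ((Fintype.card ι - #s)! : ℝ) * ∏ i ∈ s, r i
      = ∫ t in Set.Ioi (0 : ℝ), (∏ i, (r i + t)) * exp (-t) :=
        (integral_prod_add_mul_exp_neg_Ioi r).symm
    _ ≤ ∫ t in Set.Ioi (0 : ℝ), (m + t) ^ Fintype.card ι * exp (-t) := by
        refine setIntegral_mono_on (integrableOn_prod_add_mul_exp_neg_Ioi r) ?_ measurableSet_Ioi
          fun t ht => ?_
        · simpa using integrableOn_prod_add_mul_exp_neg_Ioi fun _ : ι => m
        · gcongr
          exact prod_add_le_mean_add_pow fun i => add_nonneg (hr i) (Set.mem_Ioi.mp ht).le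
    _ ≤ (Fintype.card ι)! * exp m := integral_add_pow_mul_exp_neg_Ioi_le _ hm

variable [DecidableEq ι]

theorem sum_perm_prod_one_add_le {c : ι → ι → ℝ} (hc : ∀ i j, 0 ≤ c i j) :
    ∑ σ : Perm ι, ∏ i, (1 + c i (σ i)) ≤
      (Fintype.card ι)! * exp ((∑ i, ∑ j, c i j) / Fintype.card ι) :=
  (sum_perm_prod_one_add_le_sum_factorial hc).trans
    (sum_factorial_mul_prod_le fun i => sum_nonneg fun j _ => hc i j)

theorem sum_perm_exp_mul_sum_le {a : ι → ι → ℝ} (ha : ∀ i j, a i j ∈ Set.Icc (0 : ℝ) 1)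
    {lam : ℝ} (hlam : 0 ≤ lam) :
    ∑ σ : Perm ι, exp (lam * ∑ i, a i (σ i)) ≤
      (Fintype.card ι)! *
        exp ((exp lam - 1) * ((∑ i, ∑ j, a i j) / Fintype.card ι)) := by
  have hexp : 0 ≤ exp lam - 1 := sub_nonneg.2 (Real.one_le_exp hlam)
  calc ∑ σ : Perm ι, exp (lam * ∑ i, a i (σ i))
      = ∑ σ : Perm ι, ∏ i, exp (lam * a i (σ i)) := by
        simp only [Finset.mul_sum, Real.exp_sum]
    _ ≤ ∑ σ : Perm ι, ∏ i, (1 + (exp lam - 1) * a i (σ i)) := by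
        gcongr with σ _ i
        exact exp_mul_le_one_add_mul lam (ha i (σ i))
    _ ≤ (Fintype.card ι)! *
          exp ((∑ i, ∑ j, (exp lam - 1) * a i j) / Fintype.card ι) :=
        sum_perm_prod_one_add_le fun i j => mul_nonneg hexp (ha i j).1
    _ = (Fintype.card ι)! *
          exp ((exp lam - 1) * ((∑ i, ∑ j, a i j) / Fintype.card ι)) := by
        simp only [← Finset.mul_sum, mul_div_assoc]

end Bounds

theorem permExp_const_mul (N : ℕ) (b : ℝ) (f : Perm (Fin N) → ℝ) :
    permExp N (fun σ => b * f σ) = b * permExp N f := by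
  simp only [permExp, ← Finset.mul_sum, mul_div_assoc]

theorem permExp_sum_apply (N : ℕ) (a : Fin N → Fin N → ℝ) :
    permExp N (fun σ => ∑ i, a i (σ i)) = (∑ i, ∑ j, a i j) / N := by
  cases N with
  | zero => simp [permExp]
  | succ n =>
    rw [permExp, sum_comm]
    simp only [sum_perm_apply, Fintype.card_fin, Nat.add_sub_cancel, nsmul_eq_mul,
      ← Finset.mul_sum, Nat.factorial_succ, Nat.cast_mul]
    rw [mul_comm ((n + 1 : ℕ) : ℝ), mul_div_mul_left _ _ (by positivity)]

theorem permExp_exp_mul_sub_le {N : ℕ} {a : Fin N → Fin N → ℝ}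
    (ha : ∀ i j, a i j ∈ Set.Icc (0 : ℝ) 1) {lam : ℝ} (hlam : 0 ≤ lam) :
    permExp N (fun σ => exp (lam *
        ((∑ i, a i (σ i)) - permExp N (fun σ' => ∑ i, a i (σ' i))))) ≤
      exp (permExp N (fun σ' => ∑ i, a i (σ' i)) * (exp lam - 1 - lam)) := by
  set m := permExp N (fun σ' => ∑ i, a i (σ' i)) with hm
  have mgf_le : permExp N (fun σ => exp (lam * ∑ i, a i (σ i))) ≤
      exp ((exp lam - 1) * m) := by
    rw [permExp, div_le_iff₀' (by positivity), hm, permExp_sum_apply]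
    simpa only [Fintype.card_fin] using sum_perm_exp_mul_sum_le ha hlam
  calc permExp N (fun σ => exp (lam * ((∑ i, a i (σ i)) - m)))
      = exp (-(lam * m)) * permExp N (fun σ => exp (lam * ∑ i, a i (σ i))) := by
        simp only [← permExp_const_mul, ← Real.exp_add, mul_sub, neg_add_eq_sub]
    _ ≤ exp (-(lam * m)) * exp ((exp lam - 1) * m) := by gcongr
    _ = exp (m * (exp lam - 1 - lam)) := by
        rw [← Real.exp_add]
        ring_nf

/-- MGF bound for a Hoeffding permutation statistic with entries in `[0,1]`. -/
theorem hoeffding_statistic_mgf_nonneg (N : ℕ)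
    (a : Fin N → Fin N → ℝ)
    (ha : ∀ i j, a i j ∈ Set.Icc (0 : ℝ) 1)
    (lam : ℝ) (hlam : 0 ≤ lam) :
    permExp N (fun σ => Real.exp (lam *
        ((∑ i, a i (σ i)) - permExp N (fun σ' => ∑ i, a i (σ' i)))))
      ≤ Real.exp (2 * permExp N (fun σ' => ∑ i, a i (σ' i)) * lam *
          (Real.exp (2 * lam) - 1)) := by
  have mean_nonneg : 0 ≤ permExp N (fun σ => ∑ i, a i (σ i)) :=
    div_nonneg (sum_nonneg fun σ _ => sum_nonneg fun i _ => (ha i (σ i)).1)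
      (Nat.cast_nonneg _)
  refine (permExp_exp_mul_sub_le ha hlam).trans (Real.exp_le_exp.2 ?_)
  linarith [mul_le_mul_of_nonneg_left (exp_sub_one_sub_le lam) mean_nonneg]
end

section
/- Let N, M be positive integers, let π be uniformly distributed on S_N and τ uniformly distributed on S_M, independent of each other. Let A = [a_{ij}], C = [c_{ij}] ∈ R^{N×M} be fixed matrices, with C doubly centered, and define the generalized combinatorial bilinear form Q_BF := Σ_{i∈[N], j∈[M]} c_{ij} a_{π(i)τ(j)} (note a_{π(i)τ(j)} is well-defined since π(i) ∈ [N] and τ(j) ∈ [M]). Define ν_rect := max over i,k ∈ [N] and σ, σ̃ ∈ S_M of | Σ_{j=1}^M c_{iσ(j)} a_{kσ̃(j)} |, assumed positive. Then (i) for every λ ≥ 0: E[ exp( λ ( Q_BF − E[Q_BF] ) / ν_rect ) ] ≤ exp( (54 / (N ν_rect²)) ‖C‖_op² ‖A‖_F² λ² e^{4λ} ); and (ii) for every t ≥ 0: P( Q_BF − E[Q_BF] ≥ t ) ≤ exp( − ( t / (12 ν_rect) ) · log( 1 + ν_rect t / ( (54/N) ‖C‖_op² ‖A‖_F² ) ) ).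 -/
open scoped BigOperators Classical

/-- Operator (spectral) norm of a rectangular real matrix. -/
noncomputable def opNorm {m n : ℕ} (M : Matrix (Fin m) (Fin n) ℝ) : ℝ :=
  ‖LinearMap.toContinuousLinearMap (Matrix.toEuclideanLin M)‖

/-- Frobenius norm of a real matrix. -/
noncomputable def frobNorm {m n : ℕ} (M : Matrix (Fin m) (Fin n) ℝ) : ℝ :=
  Real.sqrt (∑ i, ∑ j, (M i j) ^ 2)

/-- Expectation of `f` under independent uniform permutations of `S_N` and `S_M`. -/
noncomputable def permExp2 (N M : ℕ)
    (f : Equiv.Perm (Fin N) → Equiv.Perm (Fin M) → ℝ) : ℝ :=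
  (∑ σ : Equiv.Perm (Fin N), ∑ τ : Equiv.Perm (Fin M), f σ τ) /
    ((Nat.factorial N : ℝ) * (Nat.factorial M : ℝ))

/-- Probability of an event under independent uniform permutations of `S_N`
and `S_M`. -/
noncomputable def permProb2 (N M : ℕ)
    (p : Equiv.Perm (Fin N) → Equiv.Perm (Fin M) → Prop) : ℝ :=
  ((Finset.univ.filter
      (fun q : Equiv.Perm (Fin N) × Equiv.Perm (Fin M) => p q.1 q.2)).card : ℝ) /
    ((Nat.factorial N : ℝ) * (Nat.factorial M : ℝ))

/-!
Condition on `τ`. Then the bilinear form is Hoeffding's statistic `S σ = ∑ i, D i (σ i)` of the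
matrix `D i k = ∑ j, C i j * A k (τ j)`, whose entries are at most `ν` in absolute value, whose
total sum vanishes, and for which `∑ i k, (D i k) ^ 2 ≤ ‖C‖_op² ‖A‖_F²`.

Composing `σ` with a uniform transposition gives an exchangeable pair `(S, S')` (Stein–Chatterjee).
It bounds `𝔼 S exp (θ S)` by `θ 𝔼 (S - S') ^ 2 exp (θ S)`. The averaged square is at most
a combination of `∑ i k, (D i k) ^ 2` and `∑ i, (D i (σ i)) ^ 2`; since a transposition changes `S`
by at most `4 ν`, the latter costs only a factor `exp (4 ν θ)` under the exponentially tilted law.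
Integrating the resulting differential inequality in `θ` bounds the moment generating function.
The tail bound is Chernoff's inequality at `θ = log (1 + ν t / V) / (6 ν)`, with
`V` the variance proxy, a multiple of `‖C‖_op² ‖A‖_F² / N`.
-/

section FiniteSpace

lemma exp_sub_exp_le (x y : ℝ) : Real.exp x - Real.exp y ≤ (x - y) * Real.exp x := by
  have h : Real.exp y = Real.exp (y - x) * Real.exp x := by rw [← Real.exp_add, sub_add_cancel]
  nlinarith [Real.exp_pos x, Real.add_one_le_exp (y - x)]

lemma sub_mul_exp_sub_exp_le (x y : ℝ) :
    (x - y) * (Real.exp x - Real.exp y) ≤ (x - y) ^ 2 * (Real.exp x + Real.exp y) := by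
  wlog h : y ≤ x generalizing x y
  · linarith [this y x (le_of_not_ge h)]
  calc (x - y) * (Real.exp x - Real.exp y)
      ≤ (x - y) * ((x - y) * Real.exp x) :=
        mul_le_mul_of_nonneg_left (exp_sub_exp_le x y) (sub_nonneg.2 h)
    _ ≤ (x - y) ^ 2 * (Real.exp x + Real.exp y) := by
        nlinarith [mul_nonneg (sq_nonneg (x - y)) (Real.exp_pos y).le]

lemma sub_mul_exp_mul_sub_exp_mul_le {θ : ℝ} (hθ : 0 ≤ θ) (x y : ℝ) :
    (x - y) * (Real.exp (θ * x) - Real.exp (θ * y)) ≤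
      θ * (x - y) ^ 2 * (Real.exp (θ * x) + Real.exp (θ * y)) := by
  rcases hθ.eq_or_lt with rfl | hθ
  · simp
  · refine le_of_mul_le_mul_left ?_ hθ
    linarith [sub_mul_exp_sub_exp_le (θ * x) (θ * y)]

variable {Ω : Type*} [Fintype Ω]

/-- For `x` uniform, `(x, e x)` is an exchangeable pair, so `exp (θ * f x)` on the left may be
replaced by half of `exp (θ * f x) - exp (θ * f (e x))`. -/
lemma expect_sub_comp_mul_exp_le {e : Ω → Ω} (he : Function.Involutive e) (f : Ω → ℝ) {θ : ℝ}
    (hθ : 0 ≤ θ) :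
    𝔼 x, (f x - f (e x)) * Real.exp (θ * f x) ≤
      θ * 𝔼 x, (f x - f (e x)) ^ 2 * Real.exp (θ * f x) := by
  set g : Ω → ℝ := fun x =>
    θ * ((f x - f (e x)) ^ 2 * Real.exp (θ * f x)) - (f x - f (e x)) * Real.exp (θ * f x) with hg
  have hpair (x : Ω) : 0 ≤ g x + g (e x) := by
    simp only [hg, he x]
    linarith [sub_mul_exp_mul_sub_exp_mul_le hθ (f x) (f (e x))]
  have hinv : 𝔼 x, g (e x) = 𝔼 x, g x := Fintype.expect_equiv he.toPerm _ _ fun _ => rfl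
  have hnonneg : 0 ≤ 𝔼 x, (g x + g (e x)) := Finset.expect_nonneg fun x _ => hpair x
  rw [Finset.expect_add_distrib, hinv, ← two_mul] at hnonneg
  rw [Finset.mul_expect, ← sub_nonneg, ← Finset.expect_sub_distrib]
  exact nonneg_of_mul_nonneg_right hnonneg two_pos

lemma hasDerivAt_expect_exp_mul (f : Ω → ℝ) (t : ℝ) :
    HasDerivAt (fun s => 𝔼 x, Real.exp (s * f x)) (𝔼 x, f x * Real.exp (t * f x)) t := by
  simp only [Fintype.expect_eq_sum_div_card]
  refine (HasDerivAt.fun_sum fun x _ => ?_).div_const _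
  simpa [mul_comm] using ((hasDerivAt_id t).mul_const (f x)).exp

/-- Herbst's argument: the hypothesis says that `ψ t - log (𝔼 x, exp (t * f x))` is nondecreasing
in `t ≥ 0`. -/
lemma expect_exp_mul_le_exp_sub [Nonempty Ω] (f : Ω → ℝ) {ψ ψ' : ℝ → ℝ}
    (hψ : ∀ t, HasDerivAt ψ (ψ' t) t)
    (hf : ∀ t, 0 ≤ t → 𝔼 x, f x * Real.exp (t * f x) ≤ ψ' t * 𝔼 x, Real.exp (t * f x))
    {θ : ℝ} (hθ : 0 ≤ θ) :
    𝔼 x, Real.exp (θ * f x) ≤ Real.exp (ψ θ - ψ 0) := by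
  have hderiv (t : ℝ) := (hasDerivAt_expect_exp_mul f t).mul (hψ t).neg.exp
  have hanti : AntitoneOn (fun t => (𝔼 x, Real.exp (t * f x)) * Real.exp (-ψ t)) (Set.Ici 0) := by
    refine antitoneOn_of_hasDerivWithinAt_nonpos (convex_Ici 0)
      (fun t _ => (hderiv t).continuousAt.continuousWithinAt)
      (fun t _ => (hderiv t).hasDerivWithinAt) fun t ht => ?_
    rw [interior_Ici] at ht
    have hmul := mul_le_mul_of_nonneg_right (hf t (le_of_lt ht)) (Real.exp_pos (-ψ t)).le
    simp only [Pi.neg_apply]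
    linarith
  have hle := hanti (Set.mem_Ici.2 le_rfl) (Set.mem_Ici.2 hθ) hθ
  simp only [zero_mul, Real.exp_zero, Fintype.expect_one, one_mul] at hle
  rwa [sub_eq_add_neg, Real.exp_add, ← div_le_iff₀' (Real.exp_pos _), div_eq_mul_inv,
    ← Real.exp_neg]

end FiniteSpace

section PermSum

open Equiv

variable {ι : Type*} [Fintype ι]

/-- Hoeffding's combinatorial statistic `∑ i, D i (σ i)`; for uniform `σ` it is the random variable
to which conditioning on the column permutation reduces the bilinear form. -/
def permSum (D : ι → ι → ℝ) (σ : Perm ι) : ℝ := ∑ i, D i (σ i)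

lemma sum_sum_comp_perm {κ : Type*} [Fintype κ] (F : κ → ι → ℝ) (σ : Perm ι) :
    ∑ i, ∑ j, F i (σ j) = ∑ i, ∑ k, F i k :=
  Finset.sum_congr rfl fun i _ => Equiv.sum_comp σ (F i)

variable [DecidableEq ι]

lemma permSum_sub_permSum_mul_swap (D : ι → ι → ℝ) (σ : Perm ι) (i j : ι) :
    permSum D σ - permSum D (σ * swap i j) =
      D i (σ i) + D j (σ j) - D i (σ j) - D j (σ i) := by
  rcases eq_or_ne i j with rfl | hij
  · rw [swap_self, ← Perm.one_def, mul_one]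
    ring
  have hfix (l : ι) (hl : l ≠ i ∧ l ≠ j) : D l (σ l) - D l ((σ * swap i j) l) = 0 := by
    rw [Perm.mul_apply, swap_apply_of_ne_of_ne hl.1 hl.2, sub_self]
  rw [permSum, permSum, ← Finset.sum_sub_distrib, Fintype.sum_eq_add i j hij hfix]
  simp only [Perm.mul_apply, swap_apply_left, swap_apply_right]
  ring

lemma sum_sum_permSum_sub_permSum_mul_swap (D : ι → ι → ℝ) (σ : Perm ι) :
    ∑ i, ∑ j, (permSum D σ - permSum D (σ * swap i j)) =
      2 * (Fintype.card ι * permSum D σ - ∑ i, ∑ k, D i k) := by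
  simp only [permSum_sub_permSum_mul_swap, Finset.sum_sub_distrib, Finset.sum_add_distrib]
  rw [Finset.sum_comm (f := fun i j => D j (σ i)), sum_sum_comp_perm]
  simp only [Finset.sum_const, Finset.card_univ, nsmul_eq_mul, ← Finset.mul_sum, permSum]
  ring

lemma sum_sum_sq_permSum_sub_permSum_mul_swap_le (D : ι → ι → ℝ) (σ : Perm ι) :
    ∑ i, ∑ j, (permSum D σ - permSum D (σ * swap i j)) ^ 2 ≤
      8 * (Fintype.card ι * permSum (fun i k => D i k ^ 2) σ + ∑ i, ∑ k, D i k ^ 2) := by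
  have hsq (a b c d : ℝ) :
      (a + b - c - d) ^ 2 ≤ 4 * (a ^ 2 + b ^ 2 + c ^ 2 + d ^ 2) := by
    nlinarith [sq_nonneg (a - b), sq_nonneg (a + c), sq_nonneg (a + d), sq_nonneg (b + c),
      sq_nonneg (b + d), sq_nonneg (c - d)]
  calc ∑ i, ∑ j, (permSum D σ - permSum D (σ * swap i j)) ^ 2
      ≤ ∑ i, ∑ j, 4 * (D i (σ i) ^ 2 + D j (σ j) ^ 2 + D i (σ j) ^ 2 + D j (σ i) ^ 2) := by
        simp only [permSum_sub_permSum_mul_swap]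
        gcongr
        exact hsq _ _ _ _
    _ = 8 * (Fintype.card ι * permSum (fun i k => D i k ^ 2) σ + ∑ i, ∑ k, D i k ^ 2) := by
        simp only [← Finset.mul_sum, Finset.sum_add_distrib]
        rw [Finset.sum_comm (f := fun i j => D j (σ i) ^ 2),
          sum_sum_comp_perm fun i k => D i k ^ 2]
        simp only [Finset.sum_const, Finset.card_univ, nsmul_eq_mul, ← Finset.mul_sum, permSum]
        ring

lemma expect_comp_mul_swap (f : Perm ι → ℝ) (i j : ι) :
    𝔼 σ, f (σ * swap i j) = 𝔼 σ, f σ :=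
  Fintype.expect_equiv (Equiv.mulRight (swap i j)) _ _ fun _ => rfl

lemma card_mul_expect_permSum (D : ι → ι → ℝ) :
    Fintype.card ι * 𝔼 σ, permSum D σ = ∑ i, ∑ k, D i k := by
  have hzero : 𝔼 σ, ∑ i, ∑ j, (permSum D σ - permSum D (σ * swap i j)) = 0 := by
    simp only [Finset.expect_sum_comm, Finset.expect_sub_distrib, expect_comp_mul_swap, sub_self,
      Finset.sum_const_zero]
  simp only [sum_sum_permSum_sub_permSum_mul_swap, ← Finset.mul_expect,
    Finset.expect_sub_distrib, Fintype.expect_const] at hzero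
  linarith

lemma card_mul_expect_permSum_mul_exp_le {D : ι → ι → ℝ} (hD : ∑ i, ∑ k, D i k = 0) {θ : ℝ}
    (hθ : 0 ≤ θ) :
    Fintype.card ι * 𝔼 σ, permSum D σ * Real.exp (θ * permSum D σ) ≤
      4 * θ * 𝔼 σ, (Fintype.card ι * permSum (fun i k => D i k ^ 2) σ + ∑ i, ∑ k, D i k ^ 2) *
        Real.exp (θ * permSum D σ) := by
  have hswap (i j : ι) : Function.Involutive fun σ : Perm ι => σ * swap i j := fun σ =>
    mul_swap_mul_self i j σ
  have htwo : 2 * (Fintype.card ι * 𝔼 σ, permSum D σ * Real.exp (θ * permSum D σ)) ≤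
      θ * 𝔼 σ, 8 * (Fintype.card ι * permSum (fun i k => D i k ^ 2) σ + ∑ i, ∑ k, D i k ^ 2) *
        Real.exp (θ * permSum D σ) :=
    calc 2 * (Fintype.card ι * 𝔼 σ, permSum D σ * Real.exp (θ * permSum D σ))
        = 𝔼 σ, (∑ i, ∑ j, (permSum D σ - permSum D (σ * swap i j))) *
            Real.exp (θ * permSum D σ) := by
          simp only [sum_sum_permSum_sub_permSum_mul_swap, hD, sub_zero, mul_assoc,
            Finset.mul_expect]
      _ = ∑ i, ∑ j, 𝔼 σ, (permSum D σ - permSum D (σ * swap i j)) *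
            Real.exp (θ * permSum D σ) := by
          simp only [Finset.sum_mul, Finset.expect_sum_comm]
      _ ≤ ∑ i, ∑ j, θ * 𝔼 σ, (permSum D σ - permSum D (σ * swap i j)) ^ 2 *
            Real.exp (θ * permSum D σ) :=
          Finset.sum_le_sum fun i _ => Finset.sum_le_sum fun j _ =>
            expect_sub_comp_mul_exp_le (hswap i j) (permSum D) hθ
      _ = θ * 𝔼 σ, (∑ i, ∑ j, (permSum D σ - permSum D (σ * swap i j)) ^ 2) *
            Real.exp (θ * permSum D σ) := by
          simp only [← Finset.mul_sum, Finset.sum_mul, Finset.expect_sum_comm]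
      _ ≤ _ := by
          gcongr
          exact sum_sum_sq_permSum_sub_permSum_mul_swap_le D _
  simp only [mul_assoc (8 : ℝ), ← Finset.mul_expect] at htwo
  linarith

/-- Composing `σ` with `swap i j` for a uniformly chosen `j` makes the image of `i` uniform, at the
cost of a factor `c` in the weight. -/
lemma card_mul_expect_permSum_mul_le {F : ι → ι → ℝ} (hF : ∀ i k, 0 ≤ F i k) {w : Perm ι → ℝ}
    {c : ℝ} (hw : ∀ σ i j, w (σ * swap i j) ≤ c * w σ) :
    Fintype.card ι * 𝔼 σ, permSum F σ * w σ ≤ c * (∑ i, ∑ k, F i k) * 𝔼 σ, w σ := by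
  have hswap (i j : ι) : 𝔼 σ : Perm ι, F i (σ i) * w σ ≤ 𝔼 σ : Perm ι, F i (σ j) * (c * w σ) := by
    rw [← expect_comp_mul_swap (fun σ => F i (σ i) * w σ) i j]
    simp only [Perm.mul_apply, swap_apply_left]
    gcongr with σ
    · exact hF _ _
    · exact hw σ i j
  calc Fintype.card ι * 𝔼 σ, permSum F σ * w σ
      = ∑ i, ∑ _j : ι, 𝔼 σ : Perm ι, F i (σ i) * w σ := by
        simp only [Finset.sum_const, Finset.card_univ, nsmul_eq_mul, ← Finset.mul_sum, permSum,
          Finset.sum_mul, Finset.expect_sum_comm]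
    _ ≤ ∑ i, ∑ j, 𝔼 σ : Perm ι, F i (σ j) * (c * w σ) :=
        Finset.sum_le_sum fun i _ => Finset.sum_le_sum fun j _ => hswap i j
    _ = 𝔼 σ : Perm ι, (∑ i, ∑ j, F i (σ j)) * (c * w σ) := by
        simp only [Finset.sum_mul, Finset.expect_sum_comm]
    _ = c * (∑ i, ∑ k, F i k) * 𝔼 σ, w σ := by
        simp only [sum_sum_comp_perm, ← Finset.mul_expect]
        ring

lemma exp_mul_permSum_mul_swap_le {D : ι → ι → ℝ} {b : ℝ} (hb : ∀ i k, |D i k| ≤ b) {θ : ℝ}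
    (hθ : 0 ≤ θ) (σ : Perm ι) (i j : ι) :
    Real.exp (θ * permSum D (σ * swap i j)) ≤
      Real.exp (4 * b * θ) * Real.exp (θ * permSum D σ) := by
  have hdiff : permSum D (σ * swap i j) ≤ 4 * b + permSum D σ := by
    linarith [permSum_sub_permSum_mul_swap D σ i j, (abs_le.1 (hb i (σ i))).1,
      (abs_le.1 (hb j (σ j))).1, (abs_le.1 (hb i (σ j))).2, (abs_le.1 (hb j (σ i))).2]
  rw [← Real.exp_add, mul_comm _ θ, ← mul_add]
  gcongr

lemma card_mul_expect_permSum_mul_exp_le_of_abs_le {D : ι → ι → ℝ} {b : ℝ} (hb₀ : 0 ≤ b)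
    (hb : ∀ i k, |D i k| ≤ b) (hD : ∑ i, ∑ k, D i k = 0) {θ : ℝ} (hθ : 0 ≤ θ) :
    Fintype.card ι * 𝔼 σ, permSum D σ * Real.exp (θ * permSum D σ) ≤
      8 * θ * Real.exp (4 * b * θ) * (∑ i, ∑ k, D i k ^ 2) *
        𝔼 σ, Real.exp (θ * permSum D σ) := by
  have htilt := card_mul_expect_permSum_mul_le (F := fun i k => D i k ^ 2)
    (w := fun σ => Real.exp (θ * permSum D σ)) (fun i k => sq_nonneg (D i k))
    (exp_mul_permSum_mul_swap_le hb hθ)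
  have hone : (∑ i, ∑ k, D i k ^ 2) * 𝔼 σ, Real.exp (θ * permSum D σ) ≤
      Real.exp (4 * b * θ) * (∑ i, ∑ k, D i k ^ 2) * 𝔼 σ, Real.exp (θ * permSum D σ) := by
    rw [mul_assoc]
    exact le_mul_of_one_le_left (by positivity) (Real.one_le_exp (by positivity))
  calc Fintype.card ι * 𝔼 σ, permSum D σ * Real.exp (θ * permSum D σ)
      ≤ 4 * θ * 𝔼 σ, (Fintype.card ι * permSum (fun i k => D i k ^ 2) σ + ∑ i, ∑ k, D i k ^ 2) *
          Real.exp (θ * permSum D σ) := card_mul_expect_permSum_mul_exp_le hD hθ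
    _ = 4 * θ *
          (Fintype.card ι * 𝔼 σ, permSum (fun i k => D i k ^ 2) σ * Real.exp (θ * permSum D σ) +
            (∑ i, ∑ k, D i k ^ 2) * 𝔼 σ, Real.exp (θ * permSum D σ)) := by
        simp only [add_mul, mul_assoc, Finset.expect_add_distrib, Finset.mul_expect]
    _ ≤ 4 * θ * (Real.exp (4 * b * θ) * (∑ i, ∑ k, D i k ^ 2) * 𝔼 σ, Real.exp (θ * permSum D σ) +
          Real.exp (4 * b * θ) * (∑ i, ∑ k, D i k ^ 2) * 𝔼 σ, Real.exp (θ * permSum D σ)) := by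
        gcongr
    _ = _ := by ring

lemma expect_exp_mul_permSum_le [Nonempty ι] {D : ι → ι → ℝ} {b : ℝ} (hb : ∀ i k, |D i k| ≤ b)
    (hD : ∑ i, ∑ k, D i k = 0) {θ : ℝ} (hθ : 0 ≤ θ) :
    𝔼 σ, Real.exp (θ * permSum D σ) ≤
      Real.exp (4 / Fintype.card ι * (∑ i, ∑ k, D i k ^ 2) * θ ^ 2 * Real.exp (4 * b * θ)) := by
  have hb₀ : 0 ≤ b := (abs_nonneg _).trans (hb (Classical.arbitrary ι) (Classical.arbitrary ι))
  have hcard : (0 : ℝ) < Fintype.card ι := by exact_mod_cast Fintype.card_pos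
  set K : ℝ := 4 / Fintype.card ι * (∑ i, ∑ k, D i k ^ 2) with hK
  have hψ (t : ℝ) : HasDerivAt (fun s => K * s ^ 2 * Real.exp (4 * b * s))
      ((K * (2 * t) + K * t ^ 2 * (4 * b)) * Real.exp (4 * b * t)) t := by
    refine (((hasDerivAt_pow 2 t).const_mul K).mul
      ((hasDerivAt_id t).const_mul (4 * b)).exp).congr_deriv ?_
    simp only [Nat.cast_ofNat, Nat.add_one_sub_one, pow_one, id_eq, mul_one]
    ring
  refine (expect_exp_mul_le_exp_sub (permSum D) hψ (fun t ht => ?_) hθ).trans_eq (by simp)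
  refine le_of_mul_le_mul_left ?_ hcard
  calc Fintype.card ι * 𝔼 σ, permSum D σ * Real.exp (t * permSum D σ)
      ≤ 8 * t * Real.exp (4 * b * t) * (∑ i, ∑ k, D i k ^ 2) *
          𝔼 σ, Real.exp (t * permSum D σ) :=
        card_mul_expect_permSum_mul_exp_le_of_abs_le hb₀ hb hD ht
    _ = Fintype.card ι * (K * (2 * t) * Real.exp (4 * b * t) *
          𝔼 σ, Real.exp (t * permSum D σ)) := by
        rw [hK]
        field_simp
        ring
    _ ≤ _ := by
        have : 0 ≤ K * t ^ 2 * (4 * b) := by positivity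
        gcongr
        linarith

end PermSum

section MatrixNorms

open Equiv

variable {m n p : ℕ}

lemma sq_frobNorm (A : Matrix (Fin m) (Fin n) ℝ) : frobNorm A ^ 2 = ∑ i, ∑ j, A i j ^ 2 :=
  Real.sq_sqrt (by positivity)

lemma sum_sq_mulVec_le (C : Matrix (Fin m) (Fin n) ℝ) (v : Fin n → ℝ) :
    ∑ i, C.mulVec v i ^ 2 ≤ opNorm C ^ 2 * ∑ j, v j ^ 2 := by
  have h := pow_le_pow_left₀ (norm_nonneg _)
    ((Matrix.toEuclideanLin C).toContinuousLinearMap.le_opNorm (WithLp.toLp 2 v)) 2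
  simpa [opNorm, mul_pow, EuclideanSpace.real_norm_sq_eq, Matrix.toLpLin_apply] using h

lemma sq_frobNorm_mul_le (C : Matrix (Fin m) (Fin n) ℝ) (B : Matrix (Fin n) (Fin p) ℝ) :
    frobNorm (C * B) ^ 2 ≤ opNorm C ^ 2 * frobNorm B ^ 2 := by
  rw [sq_frobNorm, sq_frobNorm, Finset.sum_comm, Finset.sum_comm (f := fun j k => B j k ^ 2),
    Finset.mul_sum]
  exact Finset.sum_le_sum fun k _ => sum_sq_mulVec_le C fun j => B j k

lemma frobNorm_transpose (A : Matrix (Fin m) (Fin n) ℝ) : frobNorm A.transpose = frobNorm A := by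
  rw [frobNorm, frobNorm, Finset.sum_comm]
  rfl

lemma frobNorm_submatrix_perm (A : Matrix (Fin m) (Fin n) ℝ) (τ : Perm (Fin n)) :
    frobNorm (A.submatrix id τ) = frobNorm A := by
  simp only [frobNorm, Matrix.submatrix_apply, id_eq]
  rw [sum_sum_comp_perm fun i j => A i j ^ 2]

end MatrixNorms

section BennettTail

lemma mul_exp_two_thirds_mul_le {u : ℝ} (hu : 0 ≤ u) :
    u * Real.exp (2 / 3 * u) ≤ 3 * (Real.exp u - 1) := by
  have hpow (k : ℕ) : Real.exp (k * (u / 3)) = Real.exp (u / 3) ^ k := Real.exp_nat_mul _ k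
  have htwo : Real.exp (2 / 3 * u) = Real.exp (u / 3) ^ 2 := by
    rw [← hpow]
    congr 1
    push_cast
    ring
  have hthree : Real.exp u = Real.exp (u / 3) ^ 3 := by
    rw [← hpow]
    congr 1
    push_cast
    ring
  have hw : 1 ≤ Real.exp (u / 3) := Real.one_le_exp (by positivity)
  rw [htwo, hthree]
  calc u * Real.exp (u / 3) ^ 2
      ≤ 3 * (Real.exp (u / 3) - 1) * Real.exp (u / 3) ^ 2 := by
        gcongr
        linarith [Real.add_one_le_exp (u / 3)]
    _ ≤ 3 * (Real.exp (u / 3) ^ 3 - 1) := by nlinarith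

lemma le_exp_neg_mul_log_of_forall_le_exp {p t b V : ℝ} (ht : 0 ≤ t) (hb : 0 < b) (hV : 0 ≤ V)
    (h : ∀ θ, 0 ≤ θ → p ≤ Real.exp (-(θ * t)) * Real.exp (V * θ ^ 2 * Real.exp (4 * b * θ))) :
    p ≤ Real.exp (-(t / (12 * b)) * Real.log (1 + b * t / V)) := by
  rcases hV.eq_or_lt with rfl | hV
  -- Division by zero makes the right-hand side `1`.
  · simpa using h 0 le_rfl
  have hx : 0 ≤ b * t / V := by positivity
  set u : ℝ := Real.log (1 + b * t / V) with hu
  have hu₀ : 0 ≤ u := Real.log_nonneg (by linarith)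
  have hexp : Real.exp u - 1 = b * t / V := by
    rw [hu, Real.exp_log (by linarith), add_sub_cancel_left]
  have hvar : V * (u / (6 * b)) ^ 2 * Real.exp (4 * b * (u / (6 * b))) ≤ t * u / (12 * b) :=
    calc V * (u / (6 * b)) ^ 2 * Real.exp (4 * b * (u / (6 * b)))
        = V * u / (36 * b ^ 2) * (u * Real.exp (2 / 3 * u)) := by
          rw [show 4 * b * (u / (6 * b)) = 2 / 3 * u by field_simp; ring]
          ring
      _ ≤ V * u / (36 * b ^ 2) * (3 * (b * t / V)) := by
          rw [← hexp]
          exact mul_le_mul_of_nonneg_left (mul_exp_two_thirds_mul_le hu₀) (by positivity)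
      _ = t * u / (12 * b) := by
          field_simp
          ring
  refine (h (u / (6 * b)) (by positivity)).trans ?_
  rw [← Real.exp_add]
  gcongr
  calc -(u / (6 * b) * t) + V * (u / (6 * b)) ^ 2 * Real.exp (4 * b * (u / (6 * b)))
      ≤ -(u / (6 * b) * t) + t * u / (12 * b) := by gcongr
    _ = -(t / (12 * b)) * u := by ring

end BennettTail

section BilinearForm

open Equiv

variable {N M : ℕ}

lemma permExp2_eq_expect (f : Perm (Fin N) → Perm (Fin M) → ℝ) :
    permExp2 N M f = 𝔼 τ, 𝔼 σ, f σ τ := by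
  simp only [permExp2, Fintype.expect_eq_sum_div_card, Fintype.card_perm, Fintype.card_fin,
    ← Finset.sum_div, div_div]
  rw [Finset.sum_comm]

lemma permProb2_ge_le_exp_mul_permExp2 (X : Perm (Fin N) → Perm (Fin M) → ℝ) (t : ℝ) {θ : ℝ}
    (hθ : 0 ≤ θ) :
    permProb2 N M (fun σ τ => X σ τ ≥ t) ≤
      Real.exp (-(θ * t)) * permExp2 N M fun σ τ => Real.exp (θ * X σ τ) := by
  rw [permProb2, permExp2, ← mul_div_assoc, ← Fintype.sum_prod_type', Finset.mul_sum,
    Finset.card_filter, Nat.cast_sum]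
  gcongr with q
  split_ifs with hq
  · rw [Nat.cast_one, ← Real.exp_add, Real.one_le_exp_iff]
    linarith [mul_le_mul_of_nonneg_left hq hθ]
  · rw [Nat.cast_zero]
    positivity

/-- The random variable `Q_BF = ∑ i j, c i j * a (σ i) (τ j)`, with the matrices in the order
`C`, `A`. -/
def combBilinForm (C A : Matrix (Fin N) (Fin M) ℝ) (σ : Perm (Fin N)) (τ : Perm (Fin M)) : ℝ :=
  ∑ i, ∑ j, C i j * A (σ i) (τ j)

lemma combBilinForm_eq_permSum (C A : Matrix (Fin N) (Fin M) ℝ) (σ : Perm (Fin N))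
    (τ : Perm (Fin M)) :
    combBilinForm C A σ τ = permSum (fun i k => ∑ j, C i j * A k (τ j)) σ :=
  rfl

lemma sum_sum_sum_mul_eq_zero {C : Matrix (Fin N) (Fin M) ℝ} (hcol : ∀ j, ∑ i, C i j = 0)
    (B : Fin M → Fin N → ℝ) : ∑ i, ∑ k, ∑ j, C i j * B j k = 0 := by
  rw [Finset.sum_comm]
  refine Finset.sum_eq_zero fun k _ => ?_
  rw [Finset.sum_comm]
  simp only [← Finset.sum_mul, hcol, zero_mul, Finset.sum_const_zero]

lemma sum_sum_sq_sum_mul_le (C A : Matrix (Fin N) (Fin M) ℝ) (τ : Perm (Fin M)) :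
    ∑ i, ∑ k, (∑ j, C i j * A k (τ j)) ^ 2 ≤ opNorm C ^ 2 * frobNorm A ^ 2 := by
  have h := sq_frobNorm_mul_le C (A.submatrix id τ).transpose
  rw [frobNorm_transpose, frobNorm_submatrix_perm, sq_frobNorm] at h
  simpa only [Matrix.mul_apply, Matrix.transpose_apply, Matrix.submatrix_apply, id_eq] using h

lemma permExp2_combBilinForm (hN : 0 < N) {C : Matrix (Fin N) (Fin M) ℝ}
    (hcol : ∀ j, ∑ i, C i j = 0) (A : Matrix (Fin N) (Fin M) ℝ) :
    permExp2 N M (combBilinForm C A) = 0 := by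
  have hcard : (Fintype.card (Fin N) : ℝ) ≠ 0 := by simpa using hN.ne'
  rw [permExp2_eq_expect]
  refine Finset.expect_eq_zero fun τ _ => (mul_eq_zero.1 ?_).resolve_left hcard
  simp only [combBilinForm_eq_permSum]
  rw [card_mul_expect_permSum, sum_sum_sum_mul_eq_zero hcol fun j k => A k (τ j)]

lemma permExp2_exp_mul_combBilinForm_le (hN : 0 < N) {A C : Matrix (Fin N) (Fin M) ℝ}
    (hcol : ∀ j, ∑ i, C i j = 0) {ν : ℝ}
    (hν : ∀ i k (τ : Perm (Fin M)), |∑ j, C i j * A k (τ j)| ≤ ν) {θ : ℝ} (hθ : 0 ≤ θ) :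
    permExp2 N M (fun σ τ => Real.exp (θ * combBilinForm C A σ τ)) ≤
      Real.exp (4 / N * opNorm C ^ 2 * frobNorm A ^ 2 * θ ^ 2 * Real.exp (4 * ν * θ)) := by
  have : NeZero N := ⟨hN.ne'⟩
  rw [permExp2_eq_expect]
  refine Finset.expect_le Finset.univ_nonempty fun τ _ => ?_
  have hmgf := expect_exp_mul_permSum_le (fun i k => hν i k τ)
    (sum_sum_sum_mul_eq_zero hcol fun j k => A k (τ j)) hθ
  rw [Fintype.card_fin] at hmgf
  refine hmgf.trans ?_
  rw [mul_assoc (4 / (N : ℝ)) (opNorm C ^ 2)]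
  gcongr
  exact sum_sum_sq_sum_mul_le C A τ

theorem combinatorial_bilinear_form_bennett_general (hN : 0 < N) {A C : Matrix (Fin N) (Fin M) ℝ}
    (hcol : ∀ j, ∑ i, C i j = 0) {ν : ℝ} (hν₀ : 0 < ν)
    (hν : ∀ i k (τ : Perm (Fin M)), |∑ j, C i j * A k (τ j)| ≤ ν) {κ : ℝ} (hκ : 4 ≤ κ) :
    (∀ lam : ℝ, 0 ≤ lam →
      permExp2 N M (fun σ τ => Real.exp (lam *
          (combBilinForm C A σ τ - permExp2 N M (combBilinForm C A)) / ν)) ≤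
        Real.exp (κ / (N * ν ^ 2) * opNorm C ^ 2 * frobNorm A ^ 2 * lam ^ 2 *
          Real.exp (4 * lam))) ∧
    (∀ t : ℝ, 0 ≤ t →
      permProb2 N M (fun σ τ =>
          combBilinForm C A σ τ - permExp2 N M (combBilinForm C A) ≥ t) ≤
        Real.exp (-(t / (12 * ν)) *
          Real.log (1 + ν * t / (κ / N * opNorm C ^ 2 * frobNorm A ^ 2)))) := by
  have hmgf {θ : ℝ} (hθ : 0 ≤ θ) :
      permExp2 N M (fun σ τ => Real.exp (θ * combBilinForm C A σ τ)) ≤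
        Real.exp (κ / N * opNorm C ^ 2 * frobNorm A ^ 2 * θ ^ 2 * Real.exp (4 * ν * θ)) := by
    refine (permExp2_exp_mul_combBilinForm_le hN hcol hν hθ).trans ?_
    gcongr
  simp only [permExp2_combBilinForm hN hcol, sub_zero]
  refine ⟨fun lam hlam => ?_, fun t ht => ?_⟩
  · convert hmgf (div_nonneg hlam hν₀.le) using 2
    · simp only [mul_div_right_comm]
    · rw [mul_assoc 4 ν, mul_div_cancel₀ lam hν₀.ne']
      field_simp
  · refine le_exp_neg_mul_log_of_forall_le_exp ht hν₀ (by positivity) fun θ hθ => ?_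
    exact (permProb2_ge_le_exp_mul_permExp2 _ t hθ).trans
      (mul_le_mul_of_nonneg_left (hmgf hθ) (Real.exp_pos _).le)

end BilinearForm

/-- MGF and tail bounds for the generalized combinatorial bilinear form. -/
theorem combinatorial_bilinear_form_bennett
    (N M : ℕ) (hN : 0 < N) (hM : 0 < M)
    (A C : Matrix (Fin N) (Fin M) ℝ)
    (hrow : ∀ i, ∑ j, C i j = 0) (hcol : ∀ j, ∑ i, C i j = 0)
    (ν : ℝ)
    (hν : ν = Finset.univ.sup'
        ⟨(((⟨0, hN⟩ : Fin N), (⟨0, hN⟩ : Fin N)), (1, 1)), Finset.mem_univ _⟩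
        (fun p : (Fin N × Fin N) × Equiv.Perm (Fin M) × Equiv.Perm (Fin M) =>
          |∑ j : Fin M, C p.1.1 (p.2.1 j) * A p.1.2 (p.2.2 j)|))
    (hνpos : 0 < ν) :
    (∀ lam : ℝ, 0 ≤ lam →
      permExp2 N M (fun σ τ => Real.exp (lam *
          ((∑ i, ∑ j, C i j * A (σ i) (τ j))
            - permExp2 N M (fun σ' τ' => ∑ i, ∑ j, C i j * A (σ' i) (τ' j))) / ν))
        ≤ Real.exp ((54 / ((N : ℝ) * ν ^ 2)) * (opNorm C) ^ 2 * (frobNorm A) ^ 2 *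
            lam ^ 2 * Real.exp (4 * lam)))
    ∧ (∀ t : ℝ, 0 ≤ t →
      permProb2 N M (fun σ τ =>
          (∑ i, ∑ j, C i j * A (σ i) (τ j))
            - permExp2 N M (fun σ' τ' => ∑ i, ∑ j, C i j * A (σ' i) (τ' j)) ≥ t)
        ≤ Real.exp (-(t / (12 * ν)) *
            Real.log (1 + ν * t / ((54 / (N : ℝ)) * (opNorm C) ^ 2 * (frobNorm A) ^ 2)))) := by
  refine combinatorial_bilinear_form_bennett_general hN hcol hνpos (fun i k τ => ?_) (by norm_num)
  exact hν ▸ Finset.le_sup' (fun p : (Fin N × Fin N) × Equiv.Perm (Fin M) × Equiv.Perm (Fin M) =>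
    |∑ j, C p.1.1 (p.2.1 j) * A p.1.2 (p.2.2 j)|) (Finset.mem_univ ((i, k), (1, τ)))
end

section
/- There exists a universal constant K > 0 such that the following holds. Let N ≥ 20, let π be uniformly distributed on S_N, and define Chatterjee's rank correlation statistic under independence, ξ_N := 1 − (3/(N²−1)) Σ_{i=1}^{N−1} | π(i+1) − π(i) |. Then for every t > 0: P( ξ_N − E[ξ_N] ≥ t ) ≤ exp( − K N² t² / ( 1 + N t ) ) + exp( − K N t² / ( 1 + √N · t ) ). -/
open scoped BigOperators Classical

/-- Probability of an event under the uniform distribution on `S_N`. -/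
noncomputable def permProb (N : ℕ) (p : Equiv.Perm (Fin N) → Prop) : ℝ :=
  ((Finset.univ.filter p).card : ℝ) / (Nat.factorial N : ℝ)

/-- Chatterjee's rank correlation under independence, as a function of a
uniform random permutation. -/
noncomputable def chatterjeeXi (N : ℕ) (σ : Equiv.Perm (Fin N)) : ℝ :=
  1 - 3 / ((N : ℝ) ^ 2 - 1) *
    ∑ i : Fin (N - 1),
      |(((σ ⟨(i : ℕ) + 1, by have := i.isLt; omega⟩ : Fin N) : ℕ) : ℝ)
        - (((σ ⟨(i : ℕ), by have := i.isLt; omega⟩ : Fin N) : ℕ) : ℝ)|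

/-!
Build a uniform permutation of `Option α` by first choosing the image `i` of `none` and then a
uniform permutation of `α`. If `f` changes by at most `c` under a transposition, then its
conditional means given two different values of `i` differ by at most `c`, because a single
transposition matches the two conditional laws. Hoeffding's lemma thus multiplies the exponential
moment of `f` by at most `exp (c² l² / 8)` for each point, so `f` is sub-Gaussian with variance
proxy `n c² / 4`, where `n` is the number of points. A transposition changes at most four summands
of `∑ |σ (i + 1) - σ i|`, each by less than `N`, so `ξ_N` has `c = O(1 / N)`. The resulting bound
`exp (-N t² / 72)` already lies below the second exponential of the claim.
-/

open Equiv Finset MeasureTheory ProbabilityTheory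

section UniformAverage

variable {ι κ : Type*} [Fintype ι] [Fintype κ]

lemma abs_expect_sub_expect_le [Nonempty ι] {f g : ι → ℝ} {c : ℝ} (h : ∀ i, |f i - g i| ≤ c) :
    |𝔼 i, f i - 𝔼 i, g i| ≤ c := by
  rw [← expect_sub_distrib]
  exact (abs_expect_le _ _).trans (expect_le univ_nonempty fun i _ ↦ h i)

lemma integral_uniformOfFintype [Nonempty ι] [MeasurableSpace ι] [MeasurableSingletonClass ι]
    (f : ι → ℝ) : ∫ i, f i ∂(PMF.uniformOfFintype ι).toMeasure = 𝔼 i, f i := by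
  simp [PMF.integral_eq_sum, Fintype.expect_eq_sum_div_card, ← mul_sum, div_eq_inv_mul]

theorem expect_exp_mul_sub_expect_le_of_abs_sub_le [Nonempty ι] {f : ι → ℝ} {c : ℝ}
    (h : ∀ i j, |f i - f j| ≤ c) (l : ℝ) :
    𝔼 i, Real.exp (l * (f i - 𝔼 j, f j)) ≤ Real.exp (c ^ 2 * l ^ 2 / 8) := by
  let _ : MeasurableSpace ι := ⊤
  obtain ⟨i₀, hi₀⟩ := Finite.exists_min f
  have hmem (i : ι) : f i ∈ Set.Icc (f i₀) (f i₀ + c) :=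
    ⟨hi₀ i, by linarith [le_of_abs_le (h i i₀)]⟩
  have hoeffding := (hasSubgaussianMGF_of_mem_Icc (μ := (PMF.uniformOfFintype ι).toMeasure)
    (X := f) AEMeasurable.of_discrete (.of_forall hmem)).mgf_le l
  simp only [mgf, integral_uniformOfFintype] at hoeffding
  refine hoeffding.trans_eq ?_
  congr 1
  simp only [add_sub_cancel_left, div_pow, NNReal.coe_div, NNReal.coe_pow, coe_nnnorm,
    Real.norm_eq_abs, sq_abs, NNReal.coe_ofNat]
  ring

lemma expect_expect_exp_mul_sub_le {f : ι → κ → ℝ} {m : ι → ℝ} {M A B l : ℝ} (hA : 0 ≤ A)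
    (hinner : ∀ i, 𝔼 k, Real.exp (l * (f i k - m i)) ≤ A)
    (houter : 𝔼 i, Real.exp (l * (m i - M)) ≤ B) :
    𝔼 i, 𝔼 k, Real.exp (l * (f i k - M)) ≤ B * A :=
  calc 𝔼 i, 𝔼 k, Real.exp (l * (f i k - M))
      = 𝔼 i, Real.exp (l * (m i - M)) * 𝔼 k, Real.exp (l * (f i k - m i)) := by
        refine expect_congr rfl fun i _ ↦ ?_
        rw [mul_expect]
        refine expect_congr rfl fun k _ ↦ ?_
        rw [← Real.exp_add]
        ring_nf
    _ ≤ 𝔼 i, Real.exp (l * (m i - M)) * A :=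
        expect_le_expect fun i _ ↦ mul_le_mul_of_nonneg_left (hinner i) (Real.exp_pos _).le
    _ = (𝔼 i, Real.exp (l * (m i - M))) * A := (expect_mul ..).symm
    _ ≤ B * A := mul_le_mul_of_nonneg_right houter hA

end UniformAverage

section SwapLipschitz

lemma optionCongr_mul {α : Type*} (σ τ : Perm α) :
    optionCongr (σ * τ) = optionCongr σ * optionCongr τ := by
  simp only [Perm.mul_def, optionCongr_trans]

variable {α β : Type*} [DecidableEq α] [DecidableEq β]

/-- `f` is `c`-Lipschitz for transpositions: composing its argument with a transposition changes
its value by at most `c`. The transposition acts on the right, permuting positions; by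
`SwapLipschitz.swap_mul`, acting on the left makes no difference. -/
def SwapLipschitz (c : ℝ) (f : Perm α → ℝ) : Prop :=
  ∀ σ i j, |f (σ * swap i j) - f σ| ≤ c

namespace SwapLipschitz

variable {c : ℝ} {f : Perm α → ℝ}

lemma swap_mul (hf : SwapLipschitz c f) (i j : α) (σ : Perm α) :
    |f (swap i j * σ) - f σ| ≤ c := by
  rw [swap_mul_eq_mul_swap]
  exact hf ..

lemma comp_permCongr (hf : SwapLipschitz c f) (e : β ≃ α) :
    SwapLipschitz c (f ∘ e.permCongr) := fun σ i j ↦ by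
  have hswap : e.permCongr (σ * swap i j) = e.permCongr σ * swap (e i) (e j) := by
    rw [permCongr_mul, permCongr_def, permCongr_def, symm_trans_swap_trans]
  rw [Function.comp_apply, hswap]
  exact hf ..

lemma comp_mul_optionCongr {f : Perm (Option α) → ℝ} (hf : SwapLipschitz c f)
    (τ : Perm (Option α)) : SwapLipschitz c fun σ : Perm α ↦ f (τ * optionCongr σ) :=
  fun σ i j ↦ by
    have hswap : optionCongr (σ * swap i j) = optionCongr σ * swap (some i) (some j) := by
      rw [optionCongr_mul, optionCongr_swap]
    simp only [hswap, ← mul_assoc]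
    exact hf ..

end SwapLipschitz

variable [Fintype α]

lemma expect_perm_option (g : Perm (Option α) → ℝ) :
    𝔼 σ, g σ = 𝔼 i, 𝔼 σ, g (swap none i * optionCongr σ) := by
  rw [← expect_product', univ_product_univ]
  exact (Fintype.expect_equiv Perm.decomposeOption.symm _ _ fun _ ↦ rfl).symm

namespace SwapLipschitz

lemma abs_expect_swap_none_sub_le {c : ℝ} {f : Perm (Option α) → ℝ} (hf : SwapLipschitz c f)
    (i j : Option α) :
    |𝔼 σ, f (swap none i * optionCongr σ) - 𝔼 σ, f (swap none j * optionCongr σ)| ≤ c := by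
  cases i with
  | none =>
    refine abs_expect_sub_expect_le fun σ ↦ ?_
    rw [swap_self, ← Perm.one_def, one_mul, abs_sub_comm]
    exact hf.swap_mul ..
  | some a =>
    cases j with
    | none =>
      refine abs_expect_sub_expect_le fun σ ↦ ?_
      rw [swap_self, ← Perm.one_def, one_mul]
      exact hf.swap_mul ..
    | some b =>
      have hcomm : swap none (some a) * swap (some a) (some b)
          = swap (some a) (some b) * swap none (some b) := by
        rw [mul_swap_eq_swap_mul (swap _ _) none, swap_apply_right,
          swap_apply_of_ne_of_ne (Option.some_ne_none a).symm (Option.some_ne_none b).symm]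
      have hshift : 𝔼 σ, f (swap none (some a) * optionCongr σ)
          = 𝔼 σ, f (swap (some a) (some b) * (swap none (some b) * optionCongr σ)) := by
        refine (Fintype.expect_equiv (Equiv.mulLeft (swap a b)) _ _ fun σ ↦ ?_).symm
        rw [coe_mulLeft, optionCongr_mul, optionCongr_swap, ← mul_assoc, ← mul_assoc, hcomm]
      rw [hshift]
      exact abs_expect_sub_expect_le fun σ ↦ hf.swap_mul ..

lemma expect_exp_mul_sub_expect_option_le {c l A : ℝ} {f : Perm (Option α) → ℝ}
    (hf : SwapLipschitz c f) (hA : 0 ≤ A)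
    (h : ∀ g : Perm α → ℝ, SwapLipschitz c g → 𝔼 σ, Real.exp (l * (g σ - 𝔼 τ, g τ)) ≤ A) :
    𝔼 σ, Real.exp (l * (f σ - 𝔼 τ, f τ)) ≤ Real.exp (c ^ 2 * l ^ 2 / 8) * A := by
  rw [expect_perm_option, expect_perm_option f]
  exact expect_expect_exp_mul_sub_le hA (fun i ↦ h _ (hf.comp_mul_optionCongr (swap none i)))
    (expect_exp_mul_sub_expect_le_of_abs_sub_le hf.abs_expect_swap_none_sub_le l)

theorem expect_exp_mul_sub_expect_le {c : ℝ} {f : Perm α → ℝ} (hf : SwapLipschitz c f) (l : ℝ) :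
    𝔼 σ, Real.exp (l * (f σ - 𝔼 τ, f τ)) ≤ Real.exp (Fintype.card α * (c ^ 2 * l ^ 2 / 8)) := by
  refine Fintype.induction_empty_option (P := fun α _ ↦ ∀ [DecidableEq α] (f : Perm α → ℝ),
    SwapLipschitz c f → 𝔼 σ, Real.exp (l * (f σ - 𝔼 τ, f τ))
      ≤ Real.exp (Fintype.card α * (c ^ 2 * l ^ 2 / 8))) ?_ ?_ ?_ α f hf
  · intro α β _ e ih _ f hf
    classical
    let _ := Fintype.ofEquiv β e.symm
    have h := ih _ (hf.comp_permCongr e)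
    have hexpect (g : Perm β → ℝ) : 𝔼 σ, g (e.permCongr σ) = 𝔼 σ, g σ :=
      Fintype.expect_equiv e.permCongr _ _ fun _ ↦ rfl
    simp only [Function.comp_apply, hexpect] at h
    rw [← hexpect fun σ ↦ Real.exp (l * (f σ - 𝔼 τ, f τ)), ← Fintype.card_congr e]
    exact h
  · intro _ f _
    simp
  · intro α _ ih inst f hf
    classical
    obtain rfl : inst = (fun a b ↦ a.instDecidableEq b) := Subsingleton.elim _ _
    refine (hf.expect_exp_mul_sub_expect_option_le (Real.exp_pos _).le ih).trans_eq ?_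
    rw [← Real.exp_add, Fintype.card_option]
    push_cast
    ring_nf

theorem hasSubgaussianMGF [MeasurableSpace (Perm α)] [DiscreteMeasurableSpace (Perm α)] {c : ℝ}
    {f : Perm α → ℝ} (hf : SwapLipschitz c f) :
    HasSubgaussianMGF (fun σ ↦ f σ - 𝔼 τ, f τ) (Fintype.card α * (c ^ 2 / 4)).toNNReal
      (PMF.uniformOfFintype (Perm α)).toMeasure where
  integrable_exp_mul _ := .of_finite
  mgf_le l := by
    rw [mgf, integral_uniformOfFintype, Real.coe_toNNReal _ (by positivity)]
    convert hf.expect_exp_mul_sub_expect_le l using 2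
    ring

end SwapLipschitz

end SwapLipschitz

section RankCorrelation

lemma sum_abs_comp_swap_sub {α : Type*} [Fintype α] [DecidableEq α] (u : α → ℝ) (i j : α) :
    ∑ k, |u (swap i j k) - u k| = 2 * |u i - u j| := by
  obtain rfl | hij := eq_or_ne i j
  · simp
  · rw [Fintype.sum_eq_add i j hij fun k hk ↦ by simp [swap_apply_of_ne_of_ne hk.1 hk.2],
      swap_apply_left, swap_apply_right, abs_sub_comm (u j), two_mul]

lemma abs_sum_abs_sub_sub_sum_abs_sub_le {n : ℕ} (u v : Fin (n + 1) → ℝ) :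
    |(∑ k : Fin n, |u k.succ - u k.castSucc|) - (∑ k : Fin n, |v k.succ - v k.castSucc|)|
      ≤ 2 * ∑ k, |u k - v k| := by
  have hterm (k : Fin n) : |(|u k.succ - u k.castSucc| - |v k.succ - v k.castSucc|)|
      ≤ |u k.succ - v k.succ| + |u k.castSucc - v k.castSucc| := by
    refine (abs_abs_sub_abs_le_abs_sub _ _).trans ?_
    rw [sub_sub_sub_comm]
    exact abs_sub _ _
  calc _ ≤ ∑ k : Fin n, (|u k.succ - v k.succ| + |u k.castSucc - v k.castSucc|) := by
        rw [← sum_sub_distrib]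
        exact (abs_sum_le_sum_abs _ _).trans (sum_le_sum fun k _ ↦ hterm k)
    _ ≤ 2 * ∑ k, |u k - v k| := by
        rw [sum_add_distrib, two_mul]
        nth_rw 1 [Fin.sum_univ_succ]
        rw [Fin.sum_univ_castSucc]
        exact add_le_add (le_add_of_nonneg_left (abs_nonneg _))
          (le_add_of_nonneg_right (abs_nonneg _))

lemma chatterjeeXi_succ (n : ℕ) (σ : Perm (Fin (n + 1))) :
    chatterjeeXi (n + 1) σ = 1 - 3 / (((n + 1 : ℕ) : ℝ) ^ 2 - 1) *
      ∑ k : Fin n, |((σ k.succ : ℕ) : ℝ) - ((σ k.castSucc : ℕ) : ℝ)| := rfl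

lemma abs_val_sub_val_le {n : ℕ} (i j : Fin (n + 1)) : |((i : ℕ) : ℝ) - ((j : ℕ) : ℝ)| ≤ n :=
  abs_sub_le_of_nonneg_of_le (Nat.cast_nonneg _) (Nat.cast_le.2 i.is_le) (Nat.cast_nonneg _)
    (Nat.cast_le.2 j.is_le)

theorem swapLipschitz_chatterjeeXi {N : ℕ} (hN : 2 ≤ N) :
    SwapLipschitz (12 / (N : ℝ)) (chatterjeeXi N) := by
  obtain ⟨n, rfl⟩ : ∃ n, N = n + 1 := ⟨N - 1, by lia⟩
  intro σ i j
  have hn : (1 : ℝ) ≤ n := by exact_mod_cast Nat.le_of_succ_le_succ hN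
  have hpos : 0 < ((n + 1 : ℕ) : ℝ) ^ 2 - 1 := by push_cast; nlinarith
  let u : Fin (n + 1) → ℝ := fun k ↦ ((σ k : ℕ) : ℝ)
  have hsum := abs_sum_abs_sub_sub_sum_abs_sub_le u (u ∘ swap i j)
  have hswap : ∑ k, |u k - u (swap i j k)| ≤ 2 * n := by
    simp only [abs_sub_comm (u _) (u (swap i j _)), sum_abs_comp_swap_sub]
    gcongr
    exact abs_val_sub_val_le _ _
  rw [chatterjeeXi_succ, chatterjeeXi_succ, sub_sub_sub_cancel_left, ← mul_sub, abs_mul,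
    abs_of_pos (by positivity)]
  calc _ ≤ 3 / (((n + 1 : ℕ) : ℝ) ^ 2 - 1) * (2 * (2 * n)) := by
        gcongr
        exact hsum.trans (by gcongr; exact hswap)
    _ ≤ 12 / ((n + 1 : ℕ) : ℝ) := by
        rw [div_mul_eq_mul_div, div_le_div_iff₀ hpos (by positivity)]
        push_cast
        nlinarith

lemma permExp_eq_expect {N : ℕ} (f : Perm (Fin N) → ℝ) : permExp N f = 𝔼 σ, f σ := by
  rw [permExp, Fintype.expect_eq_sum_div_card, Fintype.card_perm, Fintype.card_fin]

lemma permProb_eq_measureReal {N : ℕ} [MeasurableSpace (Perm (Fin N))]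
    [DiscreteMeasurableSpace (Perm (Fin N))] (p : Perm (Fin N) → Prop) :
    permProb N p = (PMF.uniformOfFintype (Perm (Fin N))).toMeasure.real {σ | p σ} := by
  rw [permProb, measureReal_def, PMF.toMeasure_uniformOfFintype_apply _ .of_discrete]
  simp [Fintype.card_perm, Fintype.card_subtype]

theorem chatterjee_tail_general {N : ℕ} (hN : 2 ≤ N) {t : ℝ} (ht : 0 ≤ t) :
    permProb N (fun σ ↦ chatterjeeXi N σ - permExp N (chatterjeeXi N) ≥ t)
      ≤ Real.exp (-(1 / 72 * (N : ℝ) * t ^ 2)) := by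
  let _ : MeasurableSpace (Perm (Fin N)) := ⊤
  rw [permProb_eq_measureReal, permExp_eq_expect]
  refine ((swapLipschitz_chatterjeeXi hN).hasSubgaussianMGF.measure_ge_le ht).trans_eq ?_
  rw [Real.coe_toNNReal _ (by positivity), Fintype.card_fin]
  congr 1
  field_simp
  ring

end RankCorrelation

/-- Concentration of Chatterjee's rank correlation under independence. -/
theorem chatterjee_tail :
    ∃ K : ℝ, 0 < K ∧
      ∀ (N : ℕ), 20 ≤ N →
      ∀ t : ℝ, 0 < t →
        permProb N (fun σ => chatterjeeXi N σ - permExp N (chatterjeeXi N) ≥ t)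
          ≤ Real.exp (-(K * (N : ℝ) ^ 2 * t ^ 2 / (1 + (N : ℝ) * t)))
            + Real.exp (-(K * (N : ℝ) * t ^ 2 / (1 + Real.sqrt (N : ℝ) * t))) := by
  refine ⟨1 / 72, by norm_num, fun N hN t ht ↦
    (chatterjee_tail_general (by lia) ht.le).trans ?_⟩
  refine le_add_of_nonneg_of_le (Real.exp_pos _).le (Real.exp_le_exp.2 (neg_le_neg ?_))
  exact div_le_self (by positivity) (le_add_of_nonneg_right (by positivity))
end
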